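/- arXiv:1808.01670 — 8 statements merged into one kernel-verified Lean document; each statement's English description precedes it below -/
import Mathlib

section
/- Let (L;≤,⊕,',0,1) be a weak lattice effect algebra, and define the total operations a⊗b = (a'⊕(a∧b'))', a→ₛb = a'⊕(a∧b), and a⊙b = (a'⊕b')' (whenever the relevant sums are defined; note a∧b' ≤ b'' so these Sasaki operations are always defined). Then the following are equivalent: (RD1) the partial operation ⊕ makes (L;⊕,0,1) an effect algebra in which a' is the orthosupplement of a and whose induced effect-algebra order coincides with ≤ (so L is a lattice effect algebra); (RD2) for all a,b,x: a⊗x ≤ b if and only if x ≤ a→ₛb; (RD3) for all a,b,x: b' ≤ a'⊕(a∧x') if and only if x ≤ a'⊕(a∧b); (RD4) for all a,b: a ≤ b if and only if a→ₛb = 1; (RD5) for all a,b: a⊕b = 1 if and only if b = a'; (RD6) for all a,b,c: if a⊕b = c then a⊕c' = b'; (RD7) for all a,b: if a ≤ b then a⊕(a'⊙b) = b; (RD8) for all a,b: a ≤ b if and only if there exists a unique c with a⊕c = b. -/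
/-- A weak lattice effect algebra: a bounded involutive lattice with a partial
binary operation ⊕, encoded as a total function `add` whose value is only
constrained (and only meaningful) on the definedness domain `a ≤ inv b`. -/
structure WeakLEA (L : Type*) [Lattice L] [BoundedOrder L] where
  inv : L → L
  inv_inv : ∀ a : L, inv (inv a) = a
  inv_antitone : ∀ a b : L, a ≤ b → inv b ≤ inv a
  add : L → L → L
  comm : ∀ a b : L, a ≤ inv b → (b ≤ inv a ∧ add a b = add b a)
  assoc : ∀ a b c : L, b ≤ inv c → a ≤ inv (add b c) →
    (a ≤ inv b ∧ add a b ≤ inv c ∧ add a (add b c) = add (add a b) c)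
  add_zero : ∀ a : L, add a ⊥ = a

variable {L : Type*} [Lattice L] [BoundedOrder L]

/-- Sasaki product: a⊗b = (a'⊕(a∧b'))'. -/
def WeakLEA.sprod (W : WeakLEA L) (a b : L) : L :=
  W.inv (W.add (W.inv a) (a ⊓ W.inv b))

/-- Sasaki arrow: a→ₛb = a'⊕(a∧b). -/
def WeakLEA.sarrow (W : WeakLEA L) (a b : L) : L :=
  W.add (W.inv a) (a ⊓ b)

/-- a⊙b = (a'⊕b')'. -/
def WeakLEA.sdot (W : WeakLEA L) (a b : L) : L :=
  W.inv (W.add (W.inv a) (W.inv b))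

/-- (RD1): the partial operation ⊕ (i.e. `add` restricted to the pairs with
`a ≤ inv b`) makes `L` into an effect algebra in which `inv a` is the
orthosupplement of `a` and whose induced effect-algebra order coincides with
the lattice order `≤` (the axioms (E1),(E2) of effect algebras are already part
of `WeakLEA`). Hence `L` is a lattice effect algebra. -/
def WeakLEA.IsLEA (W : WeakLEA L) : Prop :=
  (∀ a : L, W.add a (W.inv a) = ⊤) ∧
  (∀ a b : L, a ≤ W.inv b → W.add a b = ⊤ → b = W.inv a) ∧
  (∀ a : L, a ≤ W.inv ⊤ → a = ⊥) ∧
  (∀ a b : L, a ≤ b ↔ ∃ c, a ≤ W.inv c ∧ W.add a c = b)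

theorem WeakLEA.le_inv_comm (W : WeakLEA L) {a b : L} (h : a ≤ W.inv b) : b ≤ W.inv a :=
  (W.comm a b h).1

theorem WeakLEA.inv_top (W : WeakLEA L) : W.inv ⊤ = ⊥ :=
  le_bot_iff.1 (by have := W.inv_antitone (W.inv ⊥) ⊤ le_top; rwa [W.inv_inv] at this)

theorem WeakLEA.inv_bot (W : WeakLEA L) : W.inv ⊥ = ⊤ := by
  rw [← W.inv_top, W.inv_inv]

theorem WeakLEA.le_add (W : WeakLEA L) {a b : L} (h : a ≤ W.inv b) : a ≤ W.add a b := by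
  have := W.le_inv_comm (W.assoc (W.inv (W.add a b)) a b h le_rfl).1
  rwa [W.inv_inv] at this

/-- key rearrangement -/
theorem WeakLEA.rearr (W : WeakLEA L) (h5 : ∀ a b : L, (a ≤ W.inv b ∧ W.add a b = ⊤) ↔ b = W.inv a)
    (a b c : L) (h : a ≤ W.inv b) (hc : W.add a b = c) :
    a ≤ W.inv (W.inv c) ∧ W.add a (W.inv c) = W.inv b := by
  subst hc
  obtain ⟨h1, h2, h3⟩ := W.assoc (W.inv (W.add a b)) a b h le_rfl
  have h4 := ((h5 (W.inv (W.add a b)) (W.add a b)).2 (W.inv_inv _).symm).2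
  rw [h3] at h4
  have h6 := (h5 _ _).1 ⟨h2, h4⟩
  have h7 := W.comm _ _ h1
  refine ⟨h7.1, ?_⟩
  rw [← h7.2]
  conv_rhs => rw [h6]
  rw [W.inv_inv]

theorem WeakLEA.mono (W : WeakLEA L) (h1 : W.IsLEA) {a s t : L} (ht : a ≤ W.inv t)
    (hst : s ≤ t) : W.add a s ≤ W.add a t := by
  obtain ⟨d, hd, rfl⟩ := (h1.2.2.2 s t).1 hst
  obtain ⟨_, h3, h4⟩ := W.assoc a s d hd ht
  rw [h4]
  exact W.le_add h3


theorem weakLEA_tfae (W : WeakLEA L) :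
    List.TFAE
      [ -- (RD1)
        W.IsLEA,
        -- (RD2)
        ∀ a b x : L, W.sprod a x ≤ b ↔ x ≤ W.sarrow a b,
        -- (RD3)
        ∀ a b x : L,
          W.inv b ≤ W.add (W.inv a) (a ⊓ W.inv x) ↔ x ≤ W.add (W.inv a) (a ⊓ b),
        -- (RD4)
        ∀ a b : L, a ≤ b ↔ W.sarrow a b = ⊤,
        -- (RD5)
        ∀ a b : L, (a ≤ W.inv b ∧ W.add a b = ⊤) ↔ b = W.inv a,
        -- (RD6)
        ∀ a b c : L, a ≤ W.inv b → W.add a b = c →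
          (a ≤ W.inv (W.inv c) ∧ W.add a (W.inv c) = W.inv b),
        -- (RD7)
        ∀ a b : L, a ≤ b →
          (a ≤ W.inv (W.sdot (W.inv a) b) ∧ W.add a (W.sdot (W.inv a) b) = b),
        -- (RD8)
        ∀ a b : L, a ≤ b ↔ ∃! c, a ≤ W.inv c ∧ W.add a c = b ] := by
  tfae_have 2 ↔ 3 := by
    have key : ∀ a b x : L, W.sprod a x ≤ b ↔ W.inv b ≤ W.add (W.inv a) (a ⊓ W.inv x) := by
      intro a b x
      unfold WeakLEA.sprod
      constructor
      · intro h
        have := W.inv_antitone _ _ h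
        rwa [W.inv_inv] at this
      · intro h
        have := W.inv_antitone _ _ h
        rwa [W.inv_inv] at this
    constructor
    · intro h a b x
      rw [← key]; exact h a b x
    · intro h a b x
      rw [key]; exact h a b x
  tfae_have 3 → 4 := by
    intro h a b
    have := h a b ⊤
    rw [W.inv_top, inf_bot_eq, W.add_zero, top_le_iff] at this
    unfold WeakLEA.sarrow
    rw [← this]
    refine ⟨W.inv_antitone a b, fun h => ?_⟩
    have := W.inv_antitone _ _ h
    rwa [W.inv_inv, W.inv_inv] at this
  tfae_have 4 → 5 := by
    intro h a b
    constructor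
    · rintro ⟨h1, h2⟩
      have h3 := W.le_inv_comm h1
      refine le_antisymm h3 ((h _ _).2 ?_)
      unfold WeakLEA.sarrow
      rw [W.inv_inv, inf_eq_right.2 h3, h2]
    · rintro rfl
      refine ⟨(W.inv_inv a).ge, ?_⟩
      have := (h (W.inv a) (W.inv a)).1 le_rfl
      unfold WeakLEA.sarrow at this
      rwa [W.inv_inv, inf_idem] at this
  tfae_have 5 → 6 := W.rearr
  tfae_have 6 → 7 := by
    intro h a b hab
    unfold WeakLEA.sdot
    have := h a (W.inv b) _ (by rwa [W.inv_inv]) rfl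
    rw [W.inv_inv b] at this
    rwa [W.inv_inv a]
  tfae_have 7 → 5 := by
    intro h a b
    unfold WeakLEA.sdot at h
    constructor
    · rintro ⟨h1, h2⟩
      have := (h _ _ h1).2
      rw [W.inv_inv, W.inv_inv, h2, W.inv_top, W.add_zero] at this
      rw [this, W.inv_inv]
    · rintro rfl
      refine ⟨(W.inv_inv a).ge, ?_⟩
      have := (h a ⊤ le_top).2
      rwa [W.inv_inv, W.inv_top, W.add_zero] at this
  tfae_have 5 → 1 := by
    intro h
    refine ⟨fun a => ((h a _).2 rfl).2, fun a b h1 h2 => (h a b).1 ⟨h1, h2⟩, fun a ha => ?_, ?_⟩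
    · rw [W.inv_top] at ha
      exact le_bot_iff.1 ha
    · intro a b
      constructor
      · intro hab
        have := W.rearr h a (W.inv b) _ (by rwa [W.inv_inv]) rfl
        rw [W.inv_inv b] at this
        exact ⟨_, this⟩
      · rintro ⟨c, hc, rfl⟩
        exact W.le_add hc
  have h15 : W.IsLEA → ∀ a b : L, (a ≤ W.inv b ∧ W.add a b = ⊤) ↔ b = W.inv a := by
    intro h a b
    refine ⟨fun h1 => h.2.1 a b h1.1 h1.2, ?_⟩
    rintro rfl
    exact ⟨(W.inv_inv a).ge, h.1 a⟩
  tfae_have 1 → 8 := by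
    intro h a b
    constructor
    · intro hab
      obtain ⟨c, hc⟩ := (h.2.2.2 a b).1 hab
      refine ⟨c, hc, ?_⟩
      intro d hd
      have e1 := (W.rearr (h15 h) a c b hc.1 hc.2).2
      have e2 := (W.rearr (h15 h) a d b hd.1 hd.2).2
      rw [← W.inv_inv d, ← e2, e1, W.inv_inv]
    · rintro ⟨c, hc, _⟩
      exact (h.2.2.2 a b).2 ⟨c, hc⟩
  tfae_have 8 → 5 := by
    intro h a b
    have key : ∀ c, a ≤ W.inv c → W.add a c = ⊤ → c = W.inv a := by
      intro c hc e
      obtain ⟨d, ⟨hd, hd2⟩, _⟩ := (h c (W.inv a)).1 (W.le_inv_comm hc)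
      have h1 := W.assoc a c d hd (by rw [hd2, W.inv_inv])
      have h2 := W.le_inv_comm h1.2.1
      rw [e, W.inv_top, le_bot_iff] at h2
      rw [← hd2, h2, W.add_zero]
    constructor
    · rintro ⟨h1, h2⟩
      exact key b h1 h2
    · rintro rfl
      obtain ⟨c, hc, _⟩ := (h a ⊤).1 le_top
      rw [← key c hc.1 hc.2]
      exact hc
  tfae_have 1 → 3 := by
    intro h
    have key : ∀ a b x : L, x ≤ W.add (W.inv a) (a ⊓ b) →
        W.inv b ≤ W.add (W.inv a) (a ⊓ W.inv x) := by
      intro a b x hx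
      have h1 : W.inv a ≤ W.inv (a ⊓ b) := W.inv_antitone _ _ inf_le_left
      obtain ⟨h2, h3⟩ := W.rearr (h15 h) _ _ _ h1 rfl
      have h4 := W.le_inv_comm h2
      rw [W.inv_inv] at h4
      calc W.inv b ≤ W.inv (a ⊓ b) := W.inv_antitone _ _ inf_le_right
        _ = _ := h3.symm
        _ ≤ _ := W.mono h (W.inv_antitone _ _ inf_le_left) (le_inf h4 (W.inv_antitone _ _ hx))
    intro a b x
    refine ⟨fun hb => ?_, key a b x⟩
    have := key a (W.inv x) (W.inv b) hb
    rwa [W.inv_inv, W.inv_inv] at this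
  tfae_finish
end

section
/- Let (L;≤,·,→,',0,1) be a system in which (L;≤,',0,1) is a bounded involutive lattice and the binary operations · and → satisfy: (cw1) a·b = (a→b')'; (cw2) if a≤b' then a'→b = b'→a and a ≤ a'→b; (cw3) if a≤b' and a≤c', then a'→b ≤ c' implies a'→c ≤ b'; (cw4) if b'≤c and a'≤b·c then a·(b·c) = (a·b)·c; (cw5) a·1 = a. Define the partial operation ⊕ by a⊕b = a'→b whenever a≤b', and undefined otherwise. Then (L;≤,⊕,',0,1) is a weak lattice effect algebra. -/
variable {L : Type*} [Lattice L] [BoundedOrder L]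

/-- Theorem: if (L;≤,',0,1) is a bounded involutive lattice and the binary
operations · and → satisfy (cw1)–(cw5), then L can be arranged into a weak
lattice effect algebra by setting a⊕b = a'→b whenever a ≤ b' (and undefined
otherwise). -/
theorem invLattice_to_weakLEA (inv : L → L) (mul arr : L → L → L)
    (inv_inv : ∀ a : L, inv (inv a) = a)
    (inv_antitone : ∀ a b : L, a ≤ b → inv b ≤ inv a)
    (cw1 : ∀ a b : L, mul a b = inv (arr a (inv b)))
    (cw2 : ∀ a b : L, a ≤ inv b →
      arr (inv a) b = arr (inv b) a ∧ a ≤ arr (inv a) b)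
    (cw3 : ∀ a b c : L, a ≤ inv b → a ≤ inv c →
      arr (inv a) b ≤ inv c → arr (inv a) c ≤ inv b)
    (cw4 : ∀ a b c : L, inv b ≤ c → inv a ≤ mul b c →
      mul a (mul b c) = mul (mul a b) c)
    (cw5 : ∀ a : L, mul a ⊤ = a) :
    ∃ W : WeakLEA L, W.inv = inv ∧
      ∀ a b : L, a ≤ inv b → W.add a b = arr (inv a) b := by
  have sw : ∀ a b : L, a ≤ inv b → b ≤ inv a := fun a b h => by
    have := inv_antitone _ _ h
    rwa [inv_inv] at this
  have itop : inv ⊤ = ⊥ := by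
    have h := inv_antitone (inv ⊥) ⊤ le_top
    rw [inv_inv] at h
    exact le_bot_iff.mp h
  refine ⟨⟨inv, inv_inv, inv_antitone, fun a b => arr (inv a) b, ?_, ?_, ?_⟩, rfl,
    fun _ _ _ => rfl⟩
  · intro a b h
    exact ⟨sw a b h, (cw2 a b h).1⟩
  · intro a b c hbc ha
    have hab : a ≤ inv b := ha.trans (inv_antitone _ _ (cw2 b c hbc).2)
    refine ⟨hab, ?_, ?_⟩
    · have h := cw3 b c a hbc (sw _ _ hab) (sw _ _ ha)
      change arr (inv a) b ≤ inv c
      rw [(cw2 a b hab).1]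
      exact h
    · have h := cw4 (inv a) (inv b) (inv c) (by rwa [inv_inv])
        (by rw [inv_inv, cw1, inv_inv]; exact ha)
      simp only [cw1, inv_inv] at h
      have h2 := congrArg inv h
      simpa only [inv_inv] using h2
  · intro a
    have h := congrArg inv (cw5 (inv a))
    rwa [cw1, inv_inv, inv_inv, itop] at h
end

section
/- Let (L;≤,·,→,0,1) be an involutive CI-lattice (i.e. a CI-lattice such that, setting a' := a→0, the structure (L;≤,',0,1) is a bounded involutive lattice) that moreover satisfies: (cw1) a·b = (a→b')'; (cw2) if a≤b' then a'→b = b'→a and a ≤ a'→b; (cw3) if a≤b' and a≤c', then a'→b ≤ c' implies a'→c ≤ b'; (cw4) if b'≤c and a'≤b·c then a·(b·c) = (a·b)·c. Define a⊕b = a'→b whenever a≤b' (undefined otherwise). Then (L;⊕,0,1) is a lattice effect algebra in which a' is the orthosupplement of a, whose induced effect-algebra order coincides with ≤, and whose Sasaki arrow coincides with →, i.e. a→ₛb = a→b for all a,b. -/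
variable {L : Type*} [Lattice L] [BoundedOrder L]

/-- Corollary: let (L;≤,·,→,0,1) be an involutive CI-lattice (with a' := a→0)
satisfying (cw1)–(cw4).  Then L can be arranged into a lattice effect algebra
by setting a⊕b = a'→b whenever a ≤ b', in which a' is the orthosupplement of a,
whose induced order coincides with ≤ and whose Sasaki arrow coincides with →. -/
theorem CILattice_to_LEA (mul arr : L → L → L)
    (CI1 : ∀ a : L, mul ⊤ a = a ∧ mul a ⊤ = a)
    (CI2 : ∀ a b c : L, mul a c ≤ b ↔ c ≤ arr a b)
    (inv_inv : ∀ a : L, arr (arr a ⊥) ⊥ = a)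
    (inv_antitone : ∀ a b : L, a ≤ b → arr b ⊥ ≤ arr a ⊥)
    (cw1 : ∀ a b : L, mul a b = arr (arr a (arr b ⊥)) ⊥)
    (cw2 : ∀ a b : L, a ≤ arr b ⊥ →
      arr (arr a ⊥) b = arr (arr b ⊥) a ∧ a ≤ arr (arr a ⊥) b)
    (cw3 : ∀ a b c : L, a ≤ arr b ⊥ → a ≤ arr c ⊥ →
      arr (arr a ⊥) b ≤ arr c ⊥ → arr (arr a ⊥) c ≤ arr b ⊥)
    (cw4 : ∀ a b c : L, arr b ⊥ ≤ c → arr a ⊥ ≤ mul b c →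
      mul a (mul b c) = mul (mul a b) c) :
    ∃ W : WeakLEA L, W.inv = (fun a => arr a ⊥) ∧
      (∀ a b : L, a ≤ arr b ⊥ → W.add a b = arr (arr a ⊥) b) ∧
      W.IsLEA ∧
      (∀ a b : L, W.sarrow a b = arr a b) := by
  have top_iff : ∀ a b : L, arr a b = ⊤ ↔ a ≤ b := by
    intro a b
    rw [← top_le_iff, ← CI2, (CI1 a).2]
  have sw : ∀ a b : L, a ≤ arr b ⊥ → b ≤ arr a ⊥ := by
    intro a b h
    have := inv_antitone _ _ h
    rwa [inv_inv] at this
  let W : WeakLEA L :=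
    { inv := fun a => arr a ⊥
      inv_inv := inv_inv
      inv_antitone := inv_antitone
      add := fun a b => arr (arr a ⊥) b
      comm := fun a b h => ⟨sw a b h, (cw2 a b h).1⟩
      assoc := by
        intro a b c hbc ha
        have hab : a ≤ arr b ⊥ := ha.trans (inv_antitone _ _ (cw2 b c hbc).2)
        refine ⟨hab, ?_, ?_⟩
        · have h := cw3 b c a hbc (sw _ _ hab) (sw _ _ ha)
          exact (cw2 a b hab).1.trans_le h
        · have h := cw4 (arr a ⊥) (arr b ⊥) (arr c ⊥) (by rw [inv_inv]; exact hbc)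
            (by rw [inv_inv, cw1, inv_inv]; exact ha)
          simp only [cw1, inv_inv] at h
          have h2 := congrArg (fun x => arr x ⊥) h
          simpa only [inv_inv] using h2
      add_zero := inv_inv }
  refine ⟨W, rfl, fun a b _ => rfl, ⟨?_, ?_, ?_, ?_⟩, ?_⟩
  · intro a
    exact (top_iff _ _).2 le_rfl
  · intro a b h1 h2
    exact le_antisymm (sw _ _ h1) ((top_iff _ _).1 h2)
  · intro a h
    have h' : a ≤ arr ⊤ ⊥ := h
    rw [← CI2, (CI1 a).1] at h'
    exact le_bot_iff.1 h'
  · intro a b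
    constructor
    · intro h
      have hb : a ≤ arr (arr b ⊥) ⊥ := by rwa [inv_inv]
      have hc : a ≤ arr (arr (arr (arr a ⊥) (arr b ⊥)) ⊥) ⊥ := by
        rw [inv_inv]; exact (cw2 a _ hb).2
      refine ⟨arr (arr (arr a ⊥) (arr b ⊥)) ⊥, hc, ?_⟩
      apply le_antisymm
      · have h3 := cw3 a (arr b ⊥) _ hb hc (by rw [inv_inv])
        rwa [inv_inv b] at h3
      · show b ≤ arr (arr a ⊥) _
        rw [← CI2, cw1]
    · rintro ⟨c, h1, rfl⟩
      exact (cw2 a c h1).2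
  · intro a b
    show arr (arr (arr a ⊥) ⊥) (a ⊓ b) = arr a b
    rw [inv_inv]
    apply le_antisymm
    · rw [← CI2]
      exact ((CI2 _ _ _).2 le_rfl).trans inf_le_right
    · rw [← CI2]
      refine le_inf ?_ ((CI2 _ _ _).2 le_rfl)
      rw [CI2, (top_iff a a).2 le_rfl]
      exact le_top
end

section
/- (Soundness of LEL) If ⊢φ is derivable in the proof system of LEL, then φ is valid in every model of LEL, i.e. V(φ)=1 for every lattice effect algebra E and every valuation V into E. -/
/-- Formulas of LEL: atomic propositions, ⊥, and implication. -/
inductive Fml (P : Type*) : Type _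
  | atom : P → Fml P
  | bot : Fml P
  | imp : Fml P → Fml P → Fml P

namespace Fml

variable {P : Type*}

/-- ¬φ = φ→⊥ -/
def neg (φ : Fml P) : Fml P := φ.imp .bot

/-- ⊤ = ¬⊥ -/
def top : Fml P := neg .bot

/-- φ⩑ψ = ¬(φ→¬ψ) -/
def conj (φ ψ : Fml P) : Fml P := neg (φ.imp ψ.neg)

/-- φ∧ψ = φ⩑(φ→ψ) -/
def wedge (φ ψ : Fml P) : Fml P := conj φ (φ.imp ψ)

end Fml

/-- Provability in LEL: the least relation closed under the axiom schemata
(A1)–(A5) and the rules (R1)–(R10); the biconditional ⊢φ↔ψ abbreviates the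
pair of assertions ⊢φ→ψ and ⊢ψ→φ, so axioms/rules with biconditionals are
split into two halves. -/
inductive Prov {P : Type*} : Fml P → Prop
  | A1 (φ : Fml P) : Prov (φ.imp φ)
  | A2a (φ : Fml P) : Prov (φ.imp φ.neg.neg)
  | A2b (φ : Fml P) : Prov (φ.neg.neg.imp φ)
  | A3 (φ : Fml P) : Prov (φ.imp Fml.top)
  | A4 (φ ψ : Fml P) : Prov ((φ.wedge ψ).imp φ)
  | A5 (φ ψ : Fml P) : Prov ((φ.wedge ψ).imp ψ)
  | R1a {φ : Fml P} : Prov φ → Prov (Fml.top.imp φ)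
  | R1b {φ : Fml P} : Prov (Fml.top.imp φ) → Prov φ
  | R2 {φ ψ χ : Fml P} : Prov (φ.imp ψ) → Prov (ψ.imp χ) → Prov (φ.imp χ)
  | R3 {φ ψ : Fml P} : Prov (φ.imp ψ) → Prov (ψ.neg.imp φ.neg)
  | R4a {φ ψ : Fml P} : Prov (φ.imp ψ) →
      Prov ((φ.neg.imp ψ).imp (ψ.neg.imp φ))
  | R4b {φ ψ : Fml P} : Prov (φ.imp ψ) →
      Prov ((ψ.neg.imp φ).imp (φ.neg.imp ψ))
  | R5 {φ ψ : Fml P} : Prov (φ.imp ψ) → Prov (φ.imp (φ.neg.imp ψ))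
  | R6 {φ ψ χ : Fml P} : Prov (φ.imp ψ) → Prov ((χ.conj φ).imp (χ.conj ψ))
  | R7a {φ ψ χ : Fml P} : Prov (φ.imp ψ) → Prov (ψ.imp φ) →
      Prov ((φ.conj χ).imp (ψ.conj χ))
  | R7b {φ ψ χ : Fml P} : Prov (φ.imp ψ) → Prov (ψ.imp φ) →
      Prov ((ψ.conj χ).imp (φ.conj χ))
  | R8 {φ ψ χ : Fml P} : Prov (φ.imp ψ) → Prov (φ.imp χ) →
      Prov (φ.imp (ψ.wedge χ))
  | R9 {φ ψ χ : Fml P} : Prov (φ.imp ψ.neg) → Prov (φ.imp χ.neg) →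
      Prov ((φ.neg.imp ψ).imp χ.neg) → Prov ((φ.neg.imp χ).imp ψ.neg)
  | R10a {φ ψ χ : Fml P} : Prov (ψ.neg.imp χ) → Prov (φ.neg.imp (ψ.conj χ)) →
      Prov ((φ.conj (ψ.conj χ)).imp ((φ.conj ψ).conj χ))
  | R10b {φ ψ χ : Fml P} : Prov (ψ.neg.imp χ) → Prov (φ.neg.imp (ψ.conj χ)) →
      Prov (((φ.conj ψ).conj χ).imp (φ.conj (ψ.conj χ)))

/-- A lattice effect algebra: an effect algebra (partial operation encoded by a
definedness predicate `D` and a total function `add` whose value is only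
meaningful on `D`) whose induced order `a ≤ b ↔ ∃ c, a⊕c = b` is a lattice;
the carrier's lattice order is required to coincide with the induced order. -/
structure LatticeEffectAlgebra (E : Type*) [Lattice E] [BoundedOrder E] where
  D : E → E → Prop
  add : E → E → E
  comm : ∀ a b : E, D a b → (D b a ∧ add a b = add b a)
  assoc : ∀ a b c : E, D b c → D a (add b c) →
    (D a b ∧ D (add a b) c ∧ add a (add b c) = add (add a b) c)
  inv : E → E
  D_inv : ∀ a : E, D a (inv a)
  add_inv : ∀ a : E, add a (inv a) = ⊤
  inv_unique : ∀ a b : E, D a b → add a b = ⊤ → b = inv a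
  D_top : ∀ a : E, D a ⊤ → a = ⊥
  le_iff : ∀ a b : E, a ≤ b ↔ ∃ c, D a c ∧ add a c = b

/-- Sasaki arrow: a→ₛb = a'⊕(a∧b). -/
def LatticeEffectAlgebra.sarrow {E : Type*} [Lattice E] [BoundedOrder E]
    (A : LatticeEffectAlgebra E) (a b : E) : E :=
  A.add (A.inv a) (a ⊓ b)

/-- The valuation of a model of LEL, extended from atomic propositions to all
formulas (V(⊥) = 0 and V(φ→ψ) = V(φ)→ₛV(ψ)). -/
def Fml.eval {P : Type*} {E : Type*} [Lattice E] [BoundedOrder E]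
    (A : LatticeEffectAlgebra E) (V : P → E) : Fml P → E
  | .atom p => V p
  | .bot => ⊥
  | .imp φ ψ => A.sarrow (φ.eval A V) (ψ.eval A V)

universe u

namespace LatticeEffectAlgebra

section
variable {E : Type*} [Lattice E] [BoundedOrder E] (A : LatticeEffectAlgebra E)

theorem assoc' {a b c : E} (h1 : A.D a b) (h2 : A.D (A.add a b) c) :
    A.D b c ∧ A.D a (A.add b c) ∧ A.add (A.add a b) c = A.add a (A.add b c) := by
  obtain ⟨h3, e3⟩ := A.comm _ _ h1
  obtain ⟨h4, e4⟩ := A.comm _ _ h2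
  rw [e3] at h4
  obtain ⟨h5, h6, e6⟩ := A.assoc _ _ _ h3 h4
  obtain ⟨h7, e7⟩ := A.comm _ _ h5
  obtain ⟨h8, e8⟩ := A.comm _ _ h6
  rw [e7] at h8 e8
  refine ⟨h7, h8, ?_⟩
  rw [e4, e3, e6, e7, e8]

theorem inv_inv (a : E) : A.inv (A.inv a) = a := by
  obtain ⟨h, e⟩ := A.comm _ _ (A.D_inv a)
  exact (A.inv_unique _ _ h (by rw [← e, A.add_inv])).symm

theorem inv_top : A.inv ⊤ = (⊥ : E) :=
  A.D_top _ (A.comm _ _ (A.D_inv ⊤)).1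

theorem inv_bot : A.inv ⊥ = (⊤ : E) := by rw [← A.inv_top, A.inv_inv]

theorem add_bot (a : E) : A.add a ⊥ = a := by
  have h1 := A.D_inv (⊤ : E)
  have e1 := A.add_inv (⊤ : E)
  rw [A.inv_top] at h1 e1
  have h2 := A.D_inv (A.inv a)
  have e2 := A.add_inv (A.inv a)
  rw [A.inv_inv] at h2 e2
  obtain ⟨_, h3, e3⟩ := A.assoc' h2 (by rw [e2]; exact h1)
  rw [e2, e1] at e3
  rw [A.inv_unique _ _ h3 e3.symm, A.inv_inv]

theorem cancel {a b c : E} (hb : A.D a b) (hc : A.D a c) (h : A.add a b = A.add a c) :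
    b = c := by
  have key : ∀ x, A.D a x → x = A.inv (A.add (A.inv (A.add a x)) a) := by
    intro x hx
    obtain ⟨h1, e1⟩ := A.comm _ _ (A.D_inv (A.add a x))
    obtain ⟨_, h3, e3⟩ := A.assoc _ _ _ hx h1
    apply A.inv_unique _ _ h3
    rw [← e3, ← e1, A.add_inv]
  rw [key b hb, key c hc, h]

theorem D_iff (a b : E) : A.D a b ↔ a ≤ A.inv b := by
  constructor
  · intro h
    obtain ⟨h, e⟩ := A.comm _ _ h
    obtain ⟨h1, h2, e2⟩ := A.assoc' h (A.D_inv _)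
    rw [A.add_inv] at e2
    rw [A.le_iff]
    exact ⟨_, h1, A.inv_unique _ _ h2 e2.symm⟩
  · intro h
    obtain ⟨c, hc, e⟩ := (A.le_iff _ _).1 h
    have h1 := A.D_inv b
    rw [← e] at h1
    exact (A.comm _ _ (A.assoc _ _ _ hc h1).1).1

theorem inv_anti {a b : E} (h : a ≤ b) : A.inv b ≤ A.inv a := by
  rw [← A.D_iff]
  apply (A.comm _ _ _).1
  rw [A.D_iff, A.inv_inv]; exact h

theorem le_inv_comm {a b : E} (h : a ≤ A.inv b) : b ≤ A.inv a := by
  have := A.inv_anti h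
  rwa [A.inv_inv] at this

theorem D_mono {c x y : E} (h : x ≤ y) (hy : A.D c y) : A.D c x := by
  rw [A.D_iff] at *
  exact hy.trans (A.inv_anti h)

theorem le_add {a b : E} (h : A.D a b) : a ≤ A.add a b := (A.le_iff _ _).2 ⟨_, h, rfl⟩

theorem add_mono {c x y : E} (h : x ≤ y) (hy : A.D c y) : A.add c x ≤ A.add c y := by
  obtain ⟨z, hz, rfl⟩ := (A.le_iff _ _).1 h
  obtain ⟨_, h2, e2⟩ := A.assoc _ _ _ hz hy
  rw [e2]
  exact A.le_add h2

theorem le_of_add {c x y : E} (hx : A.D c x) (hy : A.D c y) (h : A.add c x ≤ A.add c y) :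
    x ≤ y := by
  obtain ⟨z, hz, e⟩ := (A.le_iff _ _).1 h
  obtain ⟨h1, h2, e2⟩ := A.assoc' hx hz
  rw [e] at e2
  rw [A.cancel hy h2 e2]
  exact A.le_add h1

theorem D_arrow (a b : E) : A.D (A.inv a) (a ⊓ b) := by
  rw [A.D_iff]; exact A.inv_anti inf_le_left

theorem arrow_top (a b : E) : A.sarrow a b = ⊤ ↔ a ≤ b := by
  unfold sarrow
  constructor
  · intro h
    have := A.inv_unique _ _ (A.D_arrow a b) h
    rw [A.inv_inv] at this
    exact inf_eq_left.1 this
  · intro h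
    rw [inf_eq_left.2 h]
    have := A.add_inv (A.inv a)
    rwa [A.inv_inv] at this

theorem arrow_bot (a : E) : A.sarrow a ⊥ = A.inv a := by
  simp [sarrow, A.add_bot]

/-- `a' → b = a ⊕ b` when `b ≤ a'`. -/
theorem arrow_add {a b : E} (h : b ≤ A.inv a) : A.sarrow (A.inv a) b = A.add a b := by
  simp [sarrow, A.inv_inv, inf_eq_right.2 h]

theorem arrow_add' {a b : E} (h : b ≤ a) : A.sarrow a b = A.add (A.inv a) b := by
  simp [sarrow, inf_eq_right.2 h]

theorem le_arrow (a b : E) : a ≤ A.sarrow (A.inv a) b := by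
  have h := A.le_add (A.D_arrow (A.inv a) b)
  rw [A.inv_inv] at h
  rwa [sarrow, A.inv_inv]

theorem wedge_eq (a b : E) : A.inv (A.sarrow a (A.inv (A.sarrow a b))) = a ⊓ b := by
  have h0 := A.D_arrow a b
  have h1 := A.D_inv (A.sarrow a b)
  have e1 := A.add_inv (A.sarrow a b)
  have h : A.inv (A.sarrow a b) ≤ a := by
    have := A.inv_anti (A.le_add h0)
    rwa [A.inv_inv] at this
  rw [A.arrow_add' h]
  obtain ⟨h2, e2⟩ := A.comm _ _ h0
  unfold sarrow at *
  rw [e2] at h1 e1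
  obtain ⟨h3, h4, e4⟩ := A.assoc' h2 h1
  rw [e1] at e4
  have := A.inv_unique _ _ h4 e4.symm
  rw [e2, this, A.inv_inv]

theorem arrow_comm {a b : E} (h : a ≤ b) :
    A.sarrow (A.inv a) b = A.sarrow (A.inv b) a := by
  unfold sarrow
  rw [A.inv_inv, A.inv_inv]
  obtain ⟨c, hc, hb⟩ := (A.le_iff _ _).1 h
  obtain ⟨hc', ec⟩ := A.comm _ _ hc
  have De : A.D b (A.inv b ⊓ a) := A.D_mono inf_le_left (A.D_inv b)
  have hcf : c ≤ A.inv a ⊓ b := le_inf ((A.D_iff _ _).1 hc') (hb ▸ ec ▸ A.le_add hc')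
  obtain ⟨g, hg, eg⟩ := (A.le_iff _ _).1 hcf
  have hDf : A.D a (A.inv a ⊓ b) := A.D_mono inf_le_left (A.D_inv a)
  have hg2 := hDf
  rw [← eg] at hg2
  obtain ⟨_, hg3, eg3⟩ := A.assoc _ _ _ hg hg2
  rw [hb] at hg3 eg3
  rw [← eg, eg3]
  congr 1
  apply le_antisymm
  · apply le_inf
    · exact A.le_inv_comm ((A.D_iff _ _).1 hg3)
    · apply A.le_of_add hg hc'
      rw [eg, ← ec, hb]
      exact inf_le_right
  · rw [← hb] at De
    obtain ⟨k1, k2, ek⟩ := A.assoc' hc De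
    rw [hb] at k1 k2 ek
    apply A.le_of_add k1 hg
    rw [eg]
    apply le_inf
    · exact A.le_inv_comm ((A.D_iff _ _).1 k2)
    · have := A.add_mono (c := c) (inf_le_right : A.inv b ⊓ a ≤ a) hc'
      rwa [← ec, hb] at this

theorem conj_mono {a b c : E} (h : b ≤ c) :
    A.inv (A.sarrow a (A.inv b)) ≤ A.inv (A.sarrow a (A.inv c)) := by
  apply A.inv_anti
  exact A.add_mono (inf_le_inf_left _ (A.inv_anti h)) (A.D_arrow _ _)

theorem rule9 {a b c : E} (h1 : a ≤ A.inv b) (h2 : a ≤ A.inv c)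
    (h3 : A.sarrow (A.inv a) b ≤ A.inv c) : A.sarrow (A.inv a) c ≤ A.inv b := by
  rw [A.arrow_add (A.le_inv_comm h1)] at h3
  rw [A.arrow_add (A.le_inv_comm h2)]
  have hab := (A.D_iff _ _).2 h1
  have hac := (A.D_iff _ _).2 h2
  obtain ⟨hba, e⟩ := A.comm _ _ hab
  rw [← A.D_iff, e] at h3
  obtain ⟨_, k, _⟩ := A.assoc' hba h3
  rw [← A.D_iff]
  exact (A.comm _ _ k).1

theorem rule10 {a b c : E} (h1 : A.inv b ≤ c)
    (h2 : A.inv a ≤ A.inv (A.sarrow b (A.inv c))) :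
    A.inv (A.sarrow a (A.inv (A.inv (A.sarrow b (A.inv c))))) =
      A.inv (A.sarrow (A.inv (A.sarrow a (A.inv b))) (A.inv c)) := by
  have hc : A.inv c ≤ b := by
    have := A.inv_anti h1
    rwa [A.inv_inv] at this
  rw [A.arrow_add' hc] at *
  have hD : A.D (A.inv b) (A.inv c) := by rw [A.D_iff, A.inv_inv]; exact h1
  have hD2 := (A.D_iff _ _).2 h2
  obtain ⟨k1, k2, ek⟩ := A.assoc _ _ _ hD hD2
  have l1 : A.add (A.inv b) (A.inv c) ≤ a := by
    have := A.le_inv_comm h2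
    rwa [A.inv_inv] at this
  rw [A.inv_inv, A.arrow_add' l1, A.arrow_add' ((A.le_add hD).trans l1), A.arrow_add, ek]
  exact A.le_inv_comm ((A.D_iff _ _).1 k2)

end

end LatticeEffectAlgebra

/-- (Soundness of LEL) If ⊢φ then φ is valid in every model of LEL. -/
theorem LEL_soundness {P : Type*} {φ : Fml P} (h : Prov φ) :
    ∀ (E : Type u) [Lattice E] [BoundedOrder E]
      (A : LatticeEffectAlgebra E) (V : P → E), φ.eval A V = ⊤ := by
  intro E _ _ A V
  induction h with
  | R1a _ ih => 
    simp only [Fml.top, Fml.neg, Fml.eval, A.arrow_bot, A.inv_bot, A.arrow_top] at *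
    exact ih.ge
  | R1b _ ih => 
    simp only [Fml.top, Fml.neg, Fml.eval, A.arrow_bot, A.inv_bot, A.arrow_top] at *
    exact top_le_iff.1 ih
  | _ =>
    simp only [Fml.top, Fml.wedge, Fml.conj, Fml.neg, Fml.eval, A.arrow_bot, A.inv_bot,
      A.arrow_top, A.wedge_eq, A.inv_inv] at *
    first
    | exact le_rfl
    | exact le_top
    | exact inf_le_left
    | exact inf_le_right
    | (rename_i h1 h2; exact h1.trans h2)
    | (rename_i h1; exact A.inv_anti h1)
    | (rename_i h1; exact (A.arrow_comm h1).le)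
    | (rename_i h1; exact (A.arrow_comm h1).ge)
    | (rename_i h1; exact A.conj_mono h1)
    | (rename_i h1 h2; exact le_inf h1 h2)
    | (rename_i h1 h2; rw [le_antisymm h1 h2])
    | (rename_i h1 h2 h3; exact A.rule9 h1 h2 h3)
    | (rename_i h1 h2
       have := A.rule10 h1 h2
       rw [A.inv_inv] at this
       first
       | exact this.le
       | exact this.ge)
    | exact A.le_arrow _ _
end

section
/- (W6) Let (L;≤,⊕,',0,1) be a weak lattice effect algebra and a,r ∈ L. If a⊕a' is defined and a⊕a'=r, then r' ≤ a ≤ r. -/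
variable {L : Type*} [Lattice L] [BoundedOrder L]

/-- (W6): if a⊕a' is defined and a⊕a' = r then r' ≤ a ≤ r. -/
theorem weakLEA_W6 (W : WeakLEA L) (a r : L)
    (hdef : a ≤ W.inv (W.inv a)) (h : W.add a (W.inv a) = r) :
    W.inv r ≤ a ∧ a ≤ r := by
  subst h
  have h1 := (W.assoc (W.inv (W.add a (W.inv a))) a (W.inv a) hdef le_rfl).1
  have h2 := W.comm a (W.inv a) hdef
  have h3 := (W.assoc (W.inv (W.add a (W.inv a))) (W.inv a) a h2.1 (by rw [h2.2])).1
  rw [W.inv_inv] at h3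
  refine ⟨h3, ?_⟩
  have h4 := W.inv_antitone _ _ h1
  rwa [W.inv_inv, W.inv_inv] at h4
end

section
/- (W7) Let (L;≤,⊕,',0,1) be a weak lattice effect algebra and a,b ∈ L. Then a ≤ b and a⊕b' ≠ 1 (with a⊕b' defined) hold if and only if there exists c ∈ L with c ≠ 0 such that a⊕c is defined and a⊕c ≤ b. -/
variable {L : Type*} [Lattice L] [BoundedOrder L]

/-- (W7): a ≤ b and a⊕b' ≠ 1 (with a⊕b' defined) iff there is c ≠ 0 such that
a⊕c is defined and a⊕c ≤ b. -/
theorem weakLEA_W7 (W : WeakLEA L) (a b : L) :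
    (a ≤ b ∧ a ≤ W.inv (W.inv b) ∧ W.add a (W.inv b) ≠ ⊤) ↔
      ∃ c : L, c ≠ ⊥ ∧ a ≤ W.inv c ∧ W.add a c ≤ b := by
  have swap : ∀ x y : L, x ≤ W.inv y → y ≤ W.inv x := fun x y h => (W.comm x y h).1
  have bt : W.inv ⊤ = ⊥ := by
    have h := W.inv_antitone (W.inv ⊥) ⊤ le_top
    rw [W.inv_inv] at h
    exact le_bot_iff.mp h
  constructor
  · rintro ⟨_, h2, h3⟩
    obtain ⟨p, q, _⟩ := W.assoc (W.inv (W.add a (W.inv b))) a (W.inv b) h2 le_rfl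
    refine ⟨W.inv (W.add a (W.inv b)), ?_, swap _ _ p, ?_⟩
    · intro h
      apply h3
      rw [← W.inv_inv (W.add a (W.inv b)), h, ← bt, W.inv_inv]
    · rw [W.inv_inv b] at q
      rw [← (W.comm _ _ p).2]
      exact q
  · rintro ⟨c, hc, h1, h2⟩
    obtain ⟨p, q, _⟩ := W.assoc (W.inv b) a c h1 (W.inv_antitone _ _ h2)
    have p' := swap _ _ p
    refine ⟨?_, p', ?_⟩
    · rwa [W.inv_inv] at p'
    · intro h
      rw [(W.comm _ _ p).2, h] at q
      have r := swap _ _ q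
      rw [bt] at r
      exact hc (le_bot_iff.mp r)
end

section
/- (W8) Let (L;≤,⊕,',0,1) be a weak lattice effect algebra and a,b,c ∈ L. Then a⊕c is defined with a⊕c ≤ b if and only if b'⊕c is defined with b'⊕c ≤ a'. -/
variable {L : Type*} [Lattice L] [BoundedOrder L]

/-- (W8): a⊕c is defined with a⊕c ≤ b iff b'⊕c is defined with b'⊕c ≤ a'. -/
theorem weakLEA_W8 (W : WeakLEA L) (a b c : L) :
    (a ≤ W.inv c ∧ W.add a c ≤ b) ↔
      (W.inv b ≤ W.inv c ∧ W.add (W.inv b) c ≤ W.inv a) := by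
  have key : ∀ a b : L, (a ≤ W.inv c ∧ W.add a c ≤ b) →
      (W.inv b ≤ W.inv c ∧ W.add (W.inv b) c ≤ W.inv a) := by
    rintro a b ⟨h1, h2⟩
    obtain ⟨h3, h4⟩ := W.comm a c h1
    rw [h4] at h2
    obtain ⟨h5, h6, _⟩ := W.assoc (W.inv b) c a h3 (W.inv_antitone _ _ h2)
    exact ⟨h5, h6⟩
  refine ⟨key a b, fun h => ?_⟩
  have := key _ _ h
  rwa [W.inv_inv, W.inv_inv] at this
end

section
/- (Derived rules of LEL) The following are derivable in the proof system of LEL, for all formulas φ, ψ: (A6) ⊢φ↔(φ⩑⊤); (R11) ⊢φ if and only if ⊢φ↔⊤; (R12) if ⊢φ and ⊢φ→ψ then ⊢ψ; (R13) if ⊢φ then ⊢ψ→φ; (R14) ⊢φ→ψ if and only if ⊢φ→(φ∧ψ). -/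
/-- (A6), (R11)–(R14): derived axioms and rules of LEL. -/
theorem LEL_derived_rules {P : Type*} (φ ψ : Fml P) :
    -- (A6) ⊢φ↔(φ⩑⊤)
    (Prov (φ.imp (φ.conj Fml.top)) ∧ Prov ((φ.conj Fml.top).imp φ)) ∧
    -- (R11) ⊢φ iff ⊢φ↔⊤
    (Prov φ ↔ (Prov (φ.imp Fml.top) ∧ Prov (Fml.top.imp φ))) ∧
    -- (R12) modus ponens
    (Prov φ → Prov (φ.imp ψ) → Prov ψ) ∧
    -- (R13)
    (Prov φ → Prov (ψ.imp φ)) ∧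
    -- (R14)
    (Prov (φ.imp ψ) ↔ Prov (φ.imp (φ.wedge ψ))) := by
  refine ⟨⟨?_, ?_⟩, ⟨fun h => ⟨.A3 _, .R1a h⟩, fun h => .R1b h.2⟩,
    fun h k => .R1b (.R2 (.R1a h) k), fun h => .R2 (.A3 _) (.R1a h),
    ⟨fun h => .R8 (.A1 _) h, fun h => .R2 h (.A5 _ _)⟩⟩
  · exact .R2 (.R8 (.A1 φ) (.A1 φ)) (.R6 (.A3 (φ.imp φ)))
  · exact .R2 (.R6 (.R1a (.A1 φ))) (.A4 φ φ)
end
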